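/- arXiv:2310.00414 — 3 statements merged into one kernel-verified Lean document; each statement's English description precedes it below -/
import Mathlib

section
/- Let Γ be a reduced, non-ascending labeled graph with all labels positive, let e, f be mobile edges of Γ with f ∉ {e, ē}, and let A, A′, B, B′ be edge paths none of whose edges lies in {e, ē, f, f̄}. Then none of the following two-step slide sequences can be performed (with every single slide valid and every intermediate labeled graph reduced): (1) slide e over the concatenated path A·f·A′, then slide f over B·e·B′; (2) slide e over A·f·A′, then slide f over B·ē·B′; (3) slide e over A·f̄·A′, then slide f over B·ē·B′. (In the second slide of each sequence, e and ē are taken in their new position after the first slide.) -/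
/-! Labeled graphs in the sense of generalized Baumslag–Solitar theory. -/

structure LGraph (V E : Type) where
  o : E → V
  bar : E → E
  bar_bar : ∀ e, bar (bar e) = e
  bar_ne : ∀ e, bar e ≠ e
  lab : E → ℤ

namespace LGraph

variable {V E V' E' : Type}

/-- Terminal vertex of an oriented edge. -/
def t (G : LGraph V E) (e : E) : V := G.o (G.bar e)

/-- All labels are positive. -/
def Positive (G : LGraph V E) : Prop := ∀ e : E, 0 < G.lab e

/-- No collapsible edge: every label-1 edge is a loop. -/
def Reduced (G : LGraph V E) : Prop := ∀ e : E, G.lab e = 1 → G.o e = G.t e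

/-- An `n`-rose: one vertex and `n` pairs of oriented edges. -/
def IsRose (G : LGraph V E) (n : ℕ) : Prop :=
  Nat.card V = 1 ∧ Nat.card E = 2 * n

/-- Modulus of a single oriented edge: `λ(ē)/λ(e)`. -/
def qe (G : LGraph V E) (e : E) : ℚ := (G.lab (G.bar e) : ℚ) / (G.lab e : ℚ)

/-- Modulus of an edge path. -/
def q (G : LGraph V E) (l : List E) : ℚ := (l.map G.qe).prod

/-- Consecutive edges match up. -/
def IsEdgePath (G : LGraph V E) (l : List E) : Prop :=
  List.Chain' (fun a b => G.t a = G.o b) l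

/-- An `e`-edge path. -/
def IsEEdgePath (G : LGraph V E) (e : E) (l : List E) : Prop :=
  G.IsEdgePath l ∧
  (∀ a ∈ l, a ≠ e ∧ a ≠ G.bar e) ∧
  (∀ a ∈ l.head?, G.o a = G.o e) ∧
  ∀ i : Fin l.length, ∃ k : ℤ,
    (G.lab e : ℚ) * G.q (l.take i.1) = (k : ℚ) * (G.lab (l.get i) : ℚ)

/-- A monotone cycle `(e₁,…,eₛ,e)`. -/
def IsMonotoneCycle (G : LGraph V E) (l : List E) (e : E) : Prop :=
  G.IsEEdgePath (G.bar e) l ∧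
  G.t (l.getLastD e) = G.o e ∧
  ∃ k : ℤ, G.q (l ++ [e]) = (k : ℚ)

/-- A strict monotone cycle. -/
def IsStrictMonotoneCycle (G : LGraph V E) (l : List E) (e : E) : Prop :=
  G.IsMonotoneCycle l e ∧ G.q (l ++ [e]) ≠ 1

def HasStrictMonotoneCycle (G : LGraph V E) : Prop :=
  ∃ (l : List E) (e : E), G.IsStrictMonotoneCycle l e

/-- A strict `e`-integer cycle. -/
def IsStrictIntegerCycle (G : LGraph V E) (e : E) (l : List E) : Prop :=
  G.IsEEdgePath e l ∧ l ≠ [] ∧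
  G.t (l.getLastD e) = G.o (l.headD e) ∧
  (∃ k : ℤ, G.q l = (k : ℚ)) ∧ G.q l ≠ 1

/-- A mobile edge. -/
def Mobile (G : LGraph V E) (e : E) : Prop :=
  (∃ l, G.IsStrictMonotoneCycle l e ∨ G.IsStrictMonotoneCycle l (G.bar e)) ∨
  (∃ l, G.IsStrictIntegerCycle e l ∨ G.IsStrictIntegerCycle (G.bar e) l)

/-- The single slide of `e` over `f` is permitted. -/
def CanSlide (G : LGraph V E) (e f : E) : Prop :=
  f ≠ e ∧ f ≠ G.bar e ∧ G.o f = G.o e ∧ G.lab f ∣ G.lab e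

open Classical in
/-- The result of the single slide of `e` over `f`. -/
noncomputable def slide (G : LGraph V E) (e f : E) : LGraph V E where
  o := fun x => if x = e then G.t f else G.o x
  bar := G.bar
  bar_bar := G.bar_bar
  bar_ne := G.bar_ne
  lab := fun x => if x = e then G.lab e * G.lab (G.bar f) / G.lab f else G.lab x

/-- Successively slide `e` over the edges of a path. -/
noncomputable def slidePath : LGraph V E → E → List E → LGraph V E
  | G, _, [] => G
  | G, e, f :: l => slidePath (G.slide e f) e l

/-- Each single slide in the successive slide of `e` over a path is permitted. -/
def CanSlidePath : LGraph V E → E → List E → Prop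
  | _, _, [] => True
  | G, e, f :: l => G.CanSlide e f ∧ CanSlidePath (G.slide e f) e l

/-- Each single slide is permitted and each intermediate graph is reduced. -/
def GoodSlidePath : LGraph V E → E → List E → Prop
  | _, _, [] => True
  | G, e, f :: l => G.CanSlide e f ∧ (G.slide e f).Reduced ∧ GoodSlidePath (G.slide e f) e l

/-- Perform a finite sequence of single slides, given as pairs (slid edge, edge slid over). -/
noncomputable def slideSeq : LGraph V E → List (E × E) → LGraph V E
  | G, [] => G
  | G, p :: rest => slideSeq (G.slide p.1 p.2) rest

/-- A sequence of permitted single slides, each sliding a mobile edge. -/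
def MobileSlideSeq : LGraph V E → List (E × E) → Prop
  | _, [] => True
  | G, p :: rest => G.Mobile p.1 ∧ G.CanSlide p.1 p.2 ∧ MobileSlideSeq (G.slide p.1 p.2) rest

/-- Isomorphism of labeled graphs. -/
def Isom (G : LGraph V E) (G' : LGraph V' E') : Prop :=
  ∃ (φ : V → V') (Φ : E → E'),
    Function.Bijective φ ∧ Function.Bijective Φ ∧
    (∀ x, G'.o (Φ x) = φ (G.o x)) ∧
    (∀ x, G'.bar (Φ x) = Φ (G.bar x)) ∧
    (∀ x, G'.lab (Φ x) = G.lab x)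

open Classical in
/-- The result of the induction move at the loop `e` with multiplier `m`. -/
noncomputable def inductionMove (G : LGraph V E) (e : E) (m : ℤ) : LGraph V E where
  o := G.o
  bar := G.bar
  bar_bar := G.bar_bar
  bar_ne := G.bar_ne
  lab := fun x => if x ≠ e ∧ x ≠ G.bar e ∧ G.o x = G.o e then m * G.lab x else G.lab x

/-- `G'` is obtained from `G` by a single slide move (up to isomorphism). -/
def IsSlideMove (G : LGraph V E) (G' : LGraph V' E') : Prop :=
  ∃ e f, G.CanSlide e f ∧ Isom G' (G.slide e f)

/-- `G'` is obtained from `G` by a (forward) induction move. -/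
def IsInductionMove (G : LGraph V E) (G' : LGraph V' E') : Prop :=
  ∃ (e : E) (m : ℤ), G.o e = G.t e ∧ G.lab e = 1 ∧ 1 ≤ m ∧ m ∣ G.lab (G.bar e) ∧
    Isom G' (G.inductionMove e m)

/-- `G'` is obtained from `G` by an A-move. -/
def IsAMove (G : LGraph V E) (G' : LGraph V' E') : Prop :=
  ∃ (e d : E) (e' : E') (φ : V → V') (Φ : E → E'),
    G.o e = G.t e ∧ G.lab e = 1 ∧ G.lab (G.bar e) ≠ 1 ∧
    G.o d = G.o e ∧ G.t d ≠ G.o e ∧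
    G.lab d ≠ 1 ∧ G.lab (G.bar d) ≠ 1 ∧ G.lab d ∣ G.lab (G.bar e) ∧
    (∀ x : E, G.o x = G.o e → x = e ∨ x = G.bar e ∨ x = d) ∧
    G'.o e' = φ (G.t d) ∧ G'.t e' = φ (G.t d) ∧
    G'.lab e' = G.lab (G.bar d) ∧
    G'.lab (G'.bar e') = G.lab (G.bar d) * G.lab (G.bar e) ∧
    (∀ w₁ w₂ : V, w₁ ≠ G.o e → w₂ ≠ G.o e → φ w₁ = φ w₂ → w₁ = w₂) ∧
    (∀ v' : V', ∃ w : V, w ≠ G.o e ∧ φ w = v') ∧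
    (∀ x : E, x ≠ e → x ≠ G.bar e → x ≠ d → x ≠ G.bar d →
      Φ x ≠ e' ∧ Φ x ≠ G'.bar e' ∧
      G'.o (Φ x) = φ (G.o x) ∧ G'.bar (Φ x) = Φ (G.bar x) ∧ G'.lab (Φ x) = G.lab x) ∧
    (∀ x y : E, x ≠ e → x ≠ G.bar e → x ≠ d → x ≠ G.bar d →
      y ≠ e → y ≠ G.bar e → y ≠ d → y ≠ G.bar d → Φ x = Φ y → x = y) ∧
    (∀ y : E', y ≠ e' → y ≠ G'.bar e' →
      ∃ x : E, x ≠ e ∧ x ≠ G.bar e ∧ x ≠ d ∧ x ≠ G.bar d ∧ Φ x = y)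

/-- A strict ascending loop: a loop with `λ(e) = 1 ≠ λ(ē)`. -/
def HasStrictAscendingLoop (G : LGraph V E) : Prop :=
  ∃ e : E, G.o e = G.t e ∧ G.lab e = 1 ∧ G.lab (G.bar e) ≠ 1

end LGraph

/-- A labeled graph with its vertex and edge types bundled. -/
structure BGraph where
  V : Type
  E : Type
  G : LGraph V E

/-- An elementary deformation move: a slide, an induction move or its inverse,
or an A-move or its inverse. -/
def BGraph.ElemMove (X Y : BGraph) : Prop :=
  LGraph.IsSlideMove X.G Y.G ∨ LGraph.IsInductionMove X.G Y.G ∨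
  LGraph.IsInductionMove Y.G X.G ∨ LGraph.IsAMove X.G Y.G ∨ LGraph.IsAMove Y.G X.G

/-- A finite sequence of elementary moves with all intermediate graphs reduced. -/
def BGraph.MoveSeq : BGraph → BGraph → Prop :=
  Relation.ReflTransGen (fun X Y => X.ElemMove Y ∧ Y.G.Reduced)

/-- A reduced labeled graph is non-ascending if no reduced labeled graph obtained from it
by slide, induction and A-moves (all intermediate graphs reduced) contains a
strict ascending loop. -/
def LGraph.NonAscending {V E : Type} (G : LGraph V E) : Prop :=
  ∀ Y : BGraph, BGraph.MoveSeq ⟨V, E, G⟩ Y → ¬ Y.G.HasStrictAscendingLoop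

namespace LGraph

/-- `e`-admissible path from vertex `v` with running label `a` to vertex `w` with label `b`. -/
def Adm {V E : Type} (G : LGraph V E) (e : E) : V → ℤ → List E → V → ℤ → Prop
  | v, a, [], w, b => v = w ∧ a = b
  | v, a, x :: l, w, b => x ≠ e ∧ x ≠ G.bar e ∧ G.o x = v ∧
      ∃ k : ℤ, a = k * G.lab x ∧ Adm G e (G.t x) (k * G.lab (G.bar x)) l w b

variable {V E : Type}

theorem Adm.append {G : LGraph V E} {e : E} {l l' : List E} :
    ∀ {v : V} {a : ℤ} {w : V} {b : ℤ} {w' : V} {b' : ℤ},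
    G.Adm e v a l w b → G.Adm e w b l' w' b' → G.Adm e v a (l ++ l') w' b' := by
  induction l with
  | nil => rintro v a w b w' b' ⟨rfl, rfl⟩ h; exact h
  | cons x l ih =>
    rintro v a w b w' b' ⟨h1, h2, h3, k, h4, h5⟩ h
    exact ⟨h1, h2, h3, k, h4, ih h5 h⟩

theorem Adm.scale {G : LGraph V E} {e : E} {l : List E} (m : ℤ) :
    ∀ {v : V} {a : ℤ} {w : V} {b : ℤ},
    G.Adm e v a l w b → G.Adm e v (m * a) l w (m * b) := by
  induction l with
  | nil => rintro v a w b ⟨rfl, rfl⟩; exact ⟨rfl, rfl⟩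
  | cons x l ih =>
    rintro v a w b ⟨h1, h2, h3, k, h4, h5⟩
    refine ⟨h1, h2, h3, m * k, by rw [h4]; ring, ?_⟩
    rw [mul_assoc]
    exact ih h5

theorem bar_inj' (G : LGraph V E) {x y : E} (h : G.bar x = G.bar y) : x = y := by
  rw [← G.bar_bar x, h, G.bar_bar]

theorem t_bar (G : LGraph V E) (x : E) : G.t (G.bar x) = G.o x := by
  simp [t, G.bar_bar]

theorem Adm.reverse {G : LGraph V E} {e : E} {l : List E} :
    ∀ {v : V} {a : ℤ} {w : V} {b : ℤ},
    G.Adm e v a l w b → G.Adm e w b (l.reverse.map G.bar) v a := by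
  induction l with
  | nil => rintro v a w b ⟨rfl, rfl⟩; exact ⟨rfl, rfl⟩
  | cons x l ih =>
    rintro v a w b ⟨h1, h2, h3, k, h4, h5⟩
    rw [List.reverse_cons, List.map_append]
    refine (ih h5).append ⟨?_, ?_, rfl, k, rfl, ?_, ?_⟩
    · intro h; apply h2; rw [← h, G.bar_bar]
    · intro h; exact h1 (G.bar_inj' h)
    · rw [t_bar, h3]
    · rw [G.bar_bar, h4]

/-- Change of the excluded edge. -/
theorem Adm.change {G G' : LGraph V E} {e e' : E} {l : List E}
    (h : ∀ x ∈ l, x ≠ e' ∧ x ≠ G'.bar e' ∧ G'.o x = G.o x ∧ G'.t x = G.t x ∧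
      G'.lab x = G.lab x ∧ G'.lab (G'.bar x) = G.lab (G.bar x)) :
    ∀ {v : V} {a : ℤ} {w : V} {b : ℤ},
    G.Adm e v a l w b → G'.Adm e' v a l w b := by
  induction l with
  | nil => intro v a w b h; exact h
  | cons x l ih =>
    rintro v a w b ⟨h1, h2, h3, k, h4, h5⟩
    obtain ⟨g1, g2, g3, g4, g5, g6⟩ := h x (by simp)
    refine ⟨g1, g2, g3.trans h3, k, by rw [g5, h4], ?_⟩
    rw [g4, g6]
    exact ih (fun y hy => h y (by simp [hy])) h5

theorem Adm.mem {G : LGraph V E} {e : E} {l : List E} :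
    ∀ {v : V} {a : ℤ} {w : V} {b : ℤ},
    G.Adm e v a l w b → ∀ x ∈ l, x ≠ e ∧ x ≠ G.bar e := by
  induction l with
  | nil => intro v a w b _ x hx; simp at hx
  | cons y l ih =>
    rintro v a w b ⟨h1, h2, h3, k, h4, h5⟩ x hx
    rcases List.mem_cons.1 hx with rfl | hx
    · exact ⟨h1, h2⟩
    · exact ih h5 x hx

/-- Effect of a slide on the other edges. -/
theorem slide_other (G : LGraph V E) {e f x : E} (h1 : x ≠ e) (h2 : x ≠ G.bar e) :
    (G.slide e f).o x = G.o x ∧ (G.slide e f).t x = G.t x ∧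
      (G.slide e f).lab x = G.lab x ∧
      (G.slide e f).lab ((G.slide e f).bar x) = G.lab (G.bar x) := by
  have h3 : G.bar x ≠ e := by
    intro h; apply h2; rw [← h, G.bar_bar]
  simp [slide, t, h1, h3]

theorem slide_self_t (G : LGraph V E) (e f : E) : (G.slide e f).t e = G.t e := by
  simp [slide, t, G.bar_ne]

theorem slide_lab_bar (G : LGraph V E) (e f : E) :
    (G.slide e f).lab (G.bar e) = G.lab (G.bar e) := by
  simp [slide, G.bar_ne]

theorem Positive.slide {G : LGraph V E} (hp : G.Positive) {e f : E} {k : ℤ}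
    (hk : G.lab e = k * G.lab f) : (G.slide e f).Positive ∧
      (G.slide e f).lab e = k * G.lab (G.bar f) := by
  have hf := hp f
  have h1 : (G.slide e f).lab e = k * G.lab (G.bar f) := by
    simp only [LGraph.slide, if_true]
    rw [hk, show k * G.lab f * G.lab (G.bar f) = (k * G.lab (G.bar f)) * G.lab f by ring]
    exact Int.mul_ediv_cancel _ hf.ne'
  refine ⟨fun x => ?_, h1⟩
  by_cases hx : x = e
  · subst hx
    rw [h1]
    have := hp x
    rw [hk] at this
    exact mul_pos (pos_of_mul_pos_left this hf.le) (hp _)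
  · simp only [LGraph.slide, hx, if_false]
    exact hp x

theorem isom_refl (G : LGraph V E) : Isom G G :=
  ⟨id, id, Function.bijective_id, Function.bijective_id, fun _ => rfl, fun _ => rfl, fun _ => rfl⟩

theorem NonAscending.loop {G : LGraph V E} (hna : G.NonAscending) (hred : G.Reduced) {x : E}
    (hx : G.lab x = 1) : G.o x = G.t x ∧ G.lab (G.bar x) = 1 := by
  refine ⟨hred x hx, ?_⟩
  by_contra h
  exact hna ⟨V, E, G⟩ Relation.ReflTransGen.refl ⟨x, hred x hx, hx, h⟩

theorem Adm.one {G : LGraph V E} (hpos : G.Positive) (hna : G.NonAscending) (hred : G.Reduced)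
    {e : E} {l : List E} :
    ∀ {v w : V} {b : ℤ}, G.Adm e v 1 l w b → b = 1 := by
  induction l with
  | nil => rintro v w b ⟨rfl, rfl⟩; rfl
  | cons x l ih =>
    rintro v w b ⟨h1, h2, h3, k, h4, h5⟩
    have hx : G.lab x = 1 := Int.eq_one_of_dvd_one (hpos x).le ⟨k, by rw [h4]; ring⟩
    have hk : k = 1 := by rw [hx] at h4; omega
    rw [(hna.loop hred hx).2, hk] at h5
    exact ih h5

open Classical in
/-- The blow-up of a loop `c` used for the inverse A-move. -/
noncomputable def blow (G : LGraph V E) (c : E) (m n : ℤ) : LGraph (Option V) (E ⊕ Bool) where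
  o := fun x => match x with
    | Sum.inl x => if x = c ∨ x = G.bar c then none else some (G.o x)
    | Sum.inr b => if b then none else some (G.o c)
  bar := fun x => match x with
    | Sum.inl x => Sum.inl (G.bar x)
    | Sum.inr b => Sum.inr (!b)
  bar_bar := by rintro (x | b) <;> simp [G.bar_bar]
  bar_ne := by rintro (x | b) <;> simp [G.bar_ne]
  lab := fun x => match x with
    | Sum.inl x => if x = c then 1 else if x = G.bar c then n else G.lab x
    | Sum.inr b => if b then n else m

theorem no_virtual_loop {G : LGraph V E} (hred : G.Reduced)
    (hna : G.NonAscending) {c : E} {n : ℤ} (hloop : G.o c = G.t c) (hn : 2 ≤ n)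
    (hlab : G.lab (G.bar c) = n * G.lab c) : False := by
  by_cases h1 : G.lab c = 1
  · have := (hna.loop hred h1).2
    rw [hlab, h1] at this; omega
  have hc := G.bar_ne c
  have hbar : ∀ x, x ≠ c → x ≠ G.bar c → G.bar x ≠ c ∧ G.bar x ≠ G.bar c := by
    intro x h1 h2
    refine ⟨fun h => h2 ?_, fun h => h1 (G.bar_inj' h)⟩
    rw [← h, G.bar_bar]
  have hbred : (G.blow c (G.lab c) n).Reduced := by
    rintro (x | b) hx
    · by_cases hxc : x = c
      · subst hxc; simp [blow, t]
      · by_cases hxb : x = G.bar c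
        · subst hxb; simp [blow, t, G.bar_bar]
        · have := hbar x hxc hxb
          simp [blow, hxc, hxb] at hx
          have h := hred x hx
          simp only [t] at h
          simp [blow, t, hxc, hxb, this, h]
    · cases b
      · simp [blow] at hx; exact absurd hx h1
      · simp [blow] at hx; omega
  have hA : IsAMove (G.blow c (G.lab c) n) G := by
    refine ⟨Sum.inl c, Sum.inr true, c, fun v => v.getD (G.o c),
      fun x => match x with
        | Sum.inl x => x
        | Sum.inr _ => c, ?_, ?_, ?_, ?_, ?_, ?_, ?_, ?_, ?_, ?_, ?_, ?_, ?_, ?_, ?_, ?_, ?_, ?_⟩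
    · simp [blow, t]
    · simp [blow]
    · simp [blow, hc]; omega
    · simp [blow]
    · simp [blow, t]
    · simp [blow]; omega
    · simp [blow, h1]
    · simp [blow, hc]
    · rintro (x | b) hx
      · simp only [blow] at hx ⊢
        by_cases h : x = c ∨ x = G.bar c
        · rcases h with h | h <;> simp [h]
        · simp [h] at hx
      · cases b
        · simp [blow] at hx
        · simp
    · simp [blow, t]
    · simp [blow, t]; exact hloop.symm
    · simp [blow]
    · simp [blow, hc, hlab]; ring
    · rintro (_ | w₁) (_ | w₂) h3 h4 h <;> simp_all [blow]
    · intro v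
      exact ⟨some v, by simp [blow], rfl⟩
    · rintro (x | b) g1 g2 g3 g4
      · have e1 : x ≠ c := fun h => g1 (by rw [h])
        have e2 : x ≠ G.bar c := fun h => g2 (by rw [h]; rfl)
        simp [blow, e1, e2]
      · cases b
        · exact absurd rfl g4
        · exact absurd rfl g3
    · rintro (x | b) (y | b') g1 g2 g3 g4 g1' g2' g3' g4' h
      · simpa using h
      · cases b'
        · exact absurd rfl g4'
        · exact absurd rfl g3'
      · cases b
        · exact absurd rfl g4
        · exact absurd rfl g3
      · cases b
        · exact absurd rfl g4
        · exact absurd rfl g3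
    · intro y hy1 hy2
      exact ⟨Sum.inl y, by simpa using hy1, by simpa [blow] using hy2, by simp,
        by simp [blow], rfl⟩
  refine hna ⟨_, _, G.blow c (G.lab c) n⟩ (Relation.ReflTransGen.single
    ⟨Or.inr (Or.inr (Or.inr (Or.inr hA))), hbred⟩) ⟨Sum.inl c, ?_, ?_, ?_⟩
  · simp [blow, t]
  · simp [blow]
  · simp [blow, hc]; omega

theorem no_strict {e : E} {n : ℤ} (hn : 2 ≤ n) {l : List E} : ∀ {G : LGraph V E},
    G.Positive → G.Reduced → G.NonAscending →
    G.Adm e (G.o e) (G.lab e) l (G.t e) (n * G.lab (G.bar e)) → False := by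
  induction l with
  | nil =>
    rintro G hpos hred hna ⟨h1, h2⟩
    refine no_virtual_loop hred hna (c := G.bar e) (n := n) ?_ hn ?_
    · rw [t_bar]; exact h1.symm
    · rw [G.bar_bar, h2]
  | cons x l ih =>
    rintro G hpos hred hna h
    have hbig : n * G.lab (G.bar e) ≠ 1 := by
      have := hpos (G.bar e)
      nlinarith
    have h' := h
    obtain ⟨h1, h2, h3, k, h4, h5⟩ := h
    obtain ⟨hpos', hlab'⟩ := hpos.slide h4
    have hred' : (G.slide e x).Reduced := by
      intro y hy
      by_cases hye : y = e
      · subst hye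
        rw [hlab'] at hy
        rw [hy] at h5
        exact absurd (h5.one hpos hna hred) hbig
      · by_cases hyb : y = G.bar e
        · subst hyb
          rw [slide_lab_bar] at hy
          have := (hna.loop hred hy).2
          rw [G.bar_bar] at this
          rw [this] at h'
          exact absurd (h'.one hpos hna hred) hbig
        · obtain ⟨g1, g2, g3, g4⟩ := G.slide_other (f := x) hye hyb
          rw [g1, g2]
          exact hred y (by rw [← g3, hy])
    have hna' : (G.slide e x).NonAscending := by
      intro Y hY
      refine hna Y (Relation.ReflTransGen.head ⟨Or.inl ⟨e, x, ⟨h1, h2, h3, k, ?_⟩,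
        isom_refl _⟩, hred'⟩ hY)
      rw [h4]; ring
    refine ih hpos' hred' hna' ?_
    rw [hlab', slide_self_t]
    have e1 : (G.slide e x).o e = G.t x := by simp [slide]
    have e2 : (G.slide e x).lab ((G.slide e x).bar e) = G.lab (G.bar e) := slide_lab_bar G e x
    rw [e1, e2]
    refine h5.change (fun y hy => ?_)
    obtain ⟨m1, m2⟩ := h5.mem y hy
    exact ⟨m1, m2, G.slide_other m1 m2⟩

/-- Admissibility from the indexed definition. -/
theorem adm_of_indexed {G : LGraph V E} (hpos : G.Positive) {e : E} {l : List E} :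
    ∀ (a : ℤ) (v : V), G.IsEdgePath l → (∀ x ∈ l, x ≠ e ∧ x ≠ G.bar e) →
      (∀ x ∈ l.head?, G.o x = v) →
      (∀ i : Fin l.length, ∃ k : ℤ,
        (a : ℚ) * G.q (l.take i.1) = (k : ℚ) * (G.lab (l.get i) : ℚ)) →
      ∀ d : E, (l = [] → G.t d = v) →
      ∃ b : ℤ, G.Adm e v a l (G.t (l.getLastD d)) b ∧ (b : ℚ) = a * G.q l := by
  induction l with
  | nil =>
    intro a v _ _ _ _ d hd
    exact ⟨a, ⟨(hd rfl).symm, rfl⟩, by simp [q]⟩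
  | cons x l ih =>
    intro a v hp hm hh hi d _
    obtain ⟨k, hk⟩ := hi ⟨0, by simp⟩
    simp [q] at hk
    have hxq : (G.lab x : ℚ) ≠ 0 := by exact_mod_cast (hpos x).ne'
    have hak : (a : ℚ) * G.qe x = ((k * G.lab (G.bar x) : ℤ) : ℚ) := by
      rw [hk, qe]; push_cast; field_simp
    have hp' : G.IsEdgePath l := List.IsChain.tail hp
    obtain ⟨b, hb1, hb2⟩ := ih (k * G.lab (G.bar x)) (G.t x) hp'
      (fun y hy => hm y (by simp [hy])) (by
        intro y hy
        cases l with
        | nil => simp at hy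
        | cons z l =>
          simp at hy
          subst hy
          exact (List.isChain_cons_cons.1 hp).1.symm) (by
        intro i
        obtain ⟨k', hk'⟩ := hi ⟨i.1 + 1, by simp⟩
        refine ⟨k', ?_⟩
        rw [← hak]
        simpa [q, mul_assoc] using hk') x (fun _ => rfl)
    refine ⟨b, ⟨(hm x (by simp)).1, (hm x (by simp)).2, hh x (by simp), k,
      by exact_mod_cast hk, ?_⟩, ?_⟩
    · have : (x :: l).getLastD d = l.getLastD x := by cases l <;> rfl
      rw [this]; exact hb1
    · rw [hb2, ← hak]; simp [q, mul_assoc]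

theorem q_pos {G : LGraph V E} (hpos : G.Positive) (l : List E) : 0 < G.q l := by
  induction l with
  | nil => simp [q]
  | cons x l ih =>
    have : G.q (x :: l) = G.qe x * G.q l := by simp [q]
    rw [this]
    refine mul_pos ?_ ih
    rw [qe]
    have h1 := hpos x
    have h2 := hpos (G.bar x)
    positivity

theorem two_le_of {r : ℚ} {k : ℤ} (h : r = k) (h0 : 0 < r) (h1 : r ≠ 1) : 2 ≤ k := by
  subst h
  have a : 0 < k := by exact_mod_cast h0
  have b : k ≠ 1 := by exact_mod_cast h1
  omega

theorem no_strict_monotone {G : LGraph V E} (hpos : G.Positive) (hred : G.Reduced)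
    (hna : G.NonAscending) {l : List E} {e : E} (h : G.IsStrictMonotoneCycle l e) : False := by
  obtain ⟨⟨⟨p1, p2, p3, p4⟩, p5, k, p6⟩, p7⟩ := h
  have hk := two_le_of p6 (q_pos hpos _) p7
  obtain ⟨b, hb1, hb2⟩ := adm_of_indexed hpos (e := G.bar e) (G.lab (G.bar e)) (G.o (G.bar e))
    p1 p2 p3 p4 e (fun _ => rfl)
  have hb : b = k * G.lab (G.bar (G.bar e)) := by
    have he : (G.lab e : ℚ) ≠ 0 := by exact_mod_cast (hpos e).ne'
    have : G.q (l ++ [e]) = G.q l * G.qe e := by simp [q]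
    rw [this, qe] at p6
    rw [G.bar_bar]
    have : (b : ℚ) = k * G.lab e := by
      rw [hb2, ← p6]; field_simp
    exact_mod_cast this
  refine no_strict (e := G.bar e) hk hpos hred hna (l := l) ?_
  rw [← hb, t_bar, ← p5]
  exact hb1

theorem integer_adm {G : LGraph V E} (hpos : G.Positive) {l : List E} {e : E}
    (h : G.IsStrictIntegerCycle e l) :
    ∃ n : ℤ, 2 ≤ n ∧ G.Adm e (G.o e) (G.lab e) l (G.o e) (n * G.lab e) := by
  obtain ⟨⟨p1, p2, p3, p4⟩, p5, p6, ⟨k, p7⟩, p8⟩ := h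
  obtain ⟨b, hb1, hb2⟩ := adm_of_indexed hpos (e := e) (G.lab e) (G.o e)
    p1 p2 p3 p4 e (fun h => absurd h p5)
  refine ⟨k, two_le_of p7 (q_pos hpos _) p8, ?_⟩
  have hb : b = k * G.lab e := by
    rw [p7, mul_comm] at hb2; exact_mod_cast hb2
  rw [← hb]
  rw [p6] at hb1
  cases l with
  | nil => exact absurd rfl p5
  | cons x l =>
    have : G.o ((x :: l).headD e) = G.o e := p3 x (by simp)
    rw [this] at hb1
    exact hb1

theorem Adm.swap_bar {G : LGraph V E} {e : E} {l : List E} {v w : V} {a b : ℤ}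
    (h : G.Adm (G.bar e) v a l w b) : G.Adm e v a l w b :=
  h.change (fun x hx => ⟨by have := (h.mem x hx).2; rwa [G.bar_bar] at this, (h.mem x hx).1,
    rfl, rfl, rfl, rfl⟩)

/-- A mobile edge cannot be slid to become a loop whose labels divide each other. -/
theorem mobile_absurd {G : LGraph V E} (hpos : G.Positive) (hred : G.Reduced)
    (hna : G.NonAscending) {e : E} (hm : G.Mobile e) {l : List E} {m : ℤ} (hm1 : 1 ≤ m)
    (h : G.Adm e (G.o e) (G.lab e) l (G.t e) (m * G.lab (G.bar e))) : False := by
  rcases hm with ⟨c, hc | hc⟩ | ⟨c, hc | hc⟩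
  · exact no_strict_monotone hpos hred hna hc
  · exact no_strict_monotone hpos hred hna hc
  · obtain ⟨n, hn, hC⟩ := integer_adm hpos hc
    refine no_strict (e := e) (n := n * m) (by nlinarith) hpos hred hna (hC.append (l' := l) ?_)
    have := h.scale n
    rwa [← mul_assoc] at this
  · obtain ⟨n, hn, hC⟩ := integer_adm hpos hc
    have := h.append (hC.swap_bar.scale m)
    rw [← mul_assoc] at this
    exact no_strict (e := e) (n := m * n) (by nlinarith) hpos hred hna this

/-- Splitting a good slide path at an edge, recording data in the original graph. -/
theorem good_split {e x : E} {l l' : List E} : ∀ {G : LGraph V E}, G.Positive →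
    G.GoodSlidePath e (l ++ x :: l') →
    ∃ m : ℤ, 1 ≤ m ∧ x ≠ e ∧ x ≠ G.bar e ∧ G.Adm e (G.o e) (G.lab e) l (G.o x) (m * G.lab x) ∧
      G.Adm e (G.t x) (m * G.lab (G.bar x)) l'
        ((G.slidePath e (l ++ x :: l')).o e) ((G.slidePath e (l ++ x :: l')).lab e) := by
  have key : ∀ {l : List E} {G : LGraph V E}, G.Positive → G.GoodSlidePath e l →
      G.Adm e (G.o e) (G.lab e) l ((G.slidePath e l).o e) ((G.slidePath e l).lab e) := by
    intro l
    induction l with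
    | nil => intro G _ _; exact ⟨rfl, rfl⟩
    | cons y l ih =>
      rintro G hpos ⟨⟨h1, h2, h3, k, h4⟩, _, h5⟩
      rw [mul_comm] at h4
      obtain ⟨hp', hl'⟩ := hpos.slide h4
      refine ⟨h1, h2, h3, k, h4, ?_⟩
      have h6 := ih hp' h5
      have e1 : (G.slide e y).o e = G.t y := by simp [slide]
      rw [hl', e1] at h6
      refine h6.change (fun z hz => ?_)
      obtain ⟨m1, m2⟩ := h6.mem z hz
      obtain ⟨g1, g2, g3, g4⟩ := G.slide_other (f := y) m1 m2
      exact ⟨m1, m2, g1.symm, g2.symm, g3.symm, g4.symm⟩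
  have split : ∀ {l : List E} {G : LGraph V E} {v w : V} {a b : ℤ},
      G.Adm e v a (l ++ x :: l') w b → ∃ m : ℤ, x ≠ e ∧ x ≠ G.bar e ∧
        G.Adm e v a l (G.o x) (m * G.lab x) ∧ G.Adm e (G.t x) (m * G.lab (G.bar x)) l' w b := by
    intro l
    induction l with
    | nil =>
      rintro G v w a b ⟨h1, h2, h3, k, h4, h5⟩
      exact ⟨k, h1, h2, ⟨h3.symm, h4⟩, h5⟩
    | cons y l ih =>
      rintro G v w a b ⟨h1, h2, h3, k, h4, h5⟩
      obtain ⟨m, g1, g2, g3, g4⟩ := ih h5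
      exact ⟨m, g1, g2, ⟨h1, h2, h3, k, h4, g3⟩, g4⟩
  have admpos : ∀ {l : List E} {G : LGraph V E} {v w : V} {a b : ℤ}, G.Positive →
      G.Adm e v a l w b → 0 < a → 0 < b := by
    intro l
    induction l with
    | nil => rintro G v w a b _ ⟨rfl, rfl⟩ h; exact h
    | cons y l ih =>
      rintro G v w a b hp ⟨h1, h2, h3, k, h4, h5⟩ ha
      rw [h4] at ha
      exact ih hp h5 (mul_pos (pos_of_mul_pos_left ha (hp y).le) (hp _))
  intro G hpos h
  obtain ⟨m, g1, g2, g3, g4⟩ := split (key hpos h)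
  exact ⟨m, pos_of_mul_pos_left (admpos hpos g3 (hpos e)) (hpos x).le, g1, g2, g3, g4⟩

theorem slidePath_other {e : E} {l : List E} : ∀ {G : LGraph V E}, G.Positive →
    G.GoodSlidePath e l → (G.slidePath e l).Positive ∧ (G.slidePath e l).bar = G.bar ∧
    ∀ x, x ≠ e → (G.slidePath e l).o x = G.o x ∧ (G.slidePath e l).lab x = G.lab x := by
  induction l with
  | nil => intro G hp _; exact ⟨hp, rfl, fun _ _ => ⟨rfl, rfl⟩⟩
  | cons y l ih =>
    rintro G hpos ⟨⟨h1, h2, h3, k, h4⟩, _, h5⟩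
    rw [mul_comm] at h4
    obtain ⟨hp', hl'⟩ := hpos.slide h4
    obtain ⟨g1, g2, g3⟩ := ih hp' h5
    refine ⟨g1, g2, fun x hx => ?_⟩
    obtain ⟨g4, g5⟩ := g3 x hx
    exact ⟨g4.trans (by simp [slide, hx]), g5.trans (by simp [slide, hx])⟩

end LGraph

/-- (Lemma 4.4(o),(p),(q)) In a reduced non-ascending positively-labeled
graph, for mobile edges `e, f` with `f ∉ {e, ē}` and paths `A, A', B, B'` avoiding
`{e, ē, f, f̄}`, none of the two-step sequences
`e/AfA'·f/BeB'`, `e/AfA'·f/BēB'`, `e/Af̄A'·f/BēB'` can be performed with all single slides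
valid and all intermediate graphs reduced. -/
theorem stmt12 {V E : Type} [Finite V] [Finite E] (G : LGraph V E)
    (hpos : G.Positive) (hred : G.Reduced) (hna : G.NonAscending)
    (e f : E) (hme : G.Mobile e) (hmf : G.Mobile f)
    (hfe : f ≠ e) (hfebar : f ≠ G.bar e)
    (A A' B B' : List E)
    (hA : ∀ x ∈ A, x ≠ e ∧ x ≠ G.bar e ∧ x ≠ f ∧ x ≠ G.bar f)
    (hA' : ∀ x ∈ A', x ≠ e ∧ x ≠ G.bar e ∧ x ≠ f ∧ x ≠ G.bar f)
    (hB : ∀ x ∈ B, x ≠ e ∧ x ≠ G.bar e ∧ x ≠ f ∧ x ≠ G.bar f)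
    (hB' : ∀ x ∈ B', x ≠ e ∧ x ≠ G.bar e ∧ x ≠ f ∧ x ≠ G.bar f) :
    (¬ (G.GoodSlidePath e (A ++ f :: A') ∧
        (G.slidePath e (A ++ f :: A')).GoodSlidePath f (B ++ e :: B'))) ∧
    (¬ (G.GoodSlidePath e (A ++ f :: A') ∧
        (G.slidePath e (A ++ f :: A')).GoodSlidePath f (B ++ G.bar e :: B'))) ∧
    (¬ (G.GoodSlidePath e (A ++ G.bar f :: A') ∧
        (G.slidePath e (A ++ G.bar f :: A')).GoodSlidePath f (B ++ G.bar e :: B'))) := by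
  have hbb : ∀ x y : E, x ≠ G.bar y → G.bar x ≠ y := by
    intro x y h h'
    apply h
    rw [← h', G.bar_bar]
  have hef : G.bar e ≠ f := fun h => hfebar h.symm
  -- transfer of admissible paths back to the original graph
  have back : ∀ {P : List E} (g : E), G.GoodSlidePath e P → ∀ {l : List E} {v w : V} {a b : ℤ},
      (∀ x ∈ l, x ≠ e ∧ x ≠ G.bar e ∧ x ≠ g ∧ x ≠ G.bar g) →
      (G.slidePath e P).Adm f v a l w b → G.Adm g v a l w b := by
    intro P g hP l v w a b hl h
    obtain ⟨_, s2, s3⟩ := LGraph.slidePath_other hpos hP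
    refine h.change (fun x hx => ?_)
    obtain ⟨x1, x2, x3, x4⟩ := hl x hx
    have y1 := s3 x x1
    have y2 := s3 (G.bar x) (hbb _ _ x2)
    refine ⟨x3, x4, y1.1.symm, ?_, y1.2.symm, ?_⟩
    · simp only [LGraph.t, s2]; exact y2.1.symm
    · rw [s2]; exact y2.2.symm
  refine ⟨?_, ?_, ?_⟩
  · rintro ⟨h1, h2⟩
    obtain ⟨s1, s2, s3⟩ := LGraph.slidePath_other hpos h1
    obtain ⟨m, hm, -, -, a1, a2⟩ := LGraph.good_split hpos h1
    obtain ⟨k, hk, -, -, b1, -⟩ := LGraph.good_split s1 h2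
    rw [(s3 f hfe).1, (s3 f hfe).2] at b1
    have b2 := back f h1 (fun x hx => hB x hx) b1
    have a3 : G.Adm f _ _ A' _ _ := a2.change (e' := f) (fun x hx =>
      ⟨(hA' x hx).2.2.1, (hA' x hx).2.2.2, rfl, rfl, rfl, rfl⟩)
    have c := b2.append (a3.reverse.scale k)
    rw [← mul_assoc] at c
    exact LGraph.mobile_absurd hpos hred hna hmf (m := k * m) (by nlinarith) c
  · rintro ⟨h1, h2⟩
    obtain ⟨s1, s2, s3⟩ := LGraph.slidePath_other hpos h1
    obtain ⟨m, hm, -, -, a1, -⟩ := LGraph.good_split hpos h1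
    obtain ⟨k, hk, -, -, b1, -⟩ := LGraph.good_split s1 h2
    rw [(s3 f hfe).1, (s3 f hfe).2, (s3 _ (G.bar_ne e)).1, (s3 _ (G.bar_ne e)).2] at b1
    have b2 := back e h1 (fun x hx => ⟨(hB x hx).1, (hB x hx).2.1, (hB x hx).1, (hB x hx).2.1⟩) b1
    have c := a1.append (b2.scale m)
    rw [← mul_assoc] at c
    exact LGraph.mobile_absurd hpos hred hna hme (m := m * k) (by nlinarith) c
  · rintro ⟨h1, h2⟩
    obtain ⟨s1, s2, s3⟩ := LGraph.slidePath_other hpos h1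
    obtain ⟨m, hm, n1, n2, a1, -⟩ := LGraph.good_split hpos h1
    obtain ⟨k, hk, -, -, b1, -⟩ := LGraph.good_split s1 h2
    rw [(s3 f hfe).1, (s3 f hfe).2, (s3 _ (G.bar_ne e)).1, (s3 _ (G.bar_ne e)).2] at b1
    have b2 := back e h1 (fun x hx => ⟨(hB x hx).1, (hB x hx).2.1, (hB x hx).1, (hB x hx).2.1⟩) b1
    have b3 : G.Adm e (G.o (G.bar f)) (m * G.lab (G.bar f)) (G.bar f :: B)
        (G.o (G.bar e)) (m * (k * G.lab (G.bar e))) := by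
      refine ⟨n1, n2, rfl, m, rfl, ?_⟩
      rw [LGraph.t_bar, G.bar_bar]
      exact b2.scale m
    have c := a1.append b3
    rw [← mul_assoc] at c
    exact LGraph.mobile_absurd hpos hred hna hme (m := m * k) (by nlinarith) c
end

section
/- Let Γ be a reduced, non-ascending labeled graph with all labels positive, let e, f be mobile edges of Γ with f ∉ {e, ē}, and let A be an edge path none of whose edges lies in {e, ē, f, f̄}. Suppose that in Γ the edge e can slide over A and that afterwards f can slide over e (every slide valid, every intermediate graph reduced). Then, starting again from Γ, f can slide over the concatenated path Ā·e (where Ā = (ēₛ,…,ē₁) is the reverse of A = (e₁,…,eₛ)) and afterwards e can slide over A, and the two composite slide sequences produce the same labeled graph. -/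
namespace LGraph

variable {V E : Type}

open Classical in
/-- Replace the origin and label of the oriented edge `e`. -/
noncomputable def upd (G : LGraph V E) (e : E) (v : V) (n : ℤ) : LGraph V E where
  o := fun x => if x = e then v else G.o x
  bar := G.bar
  bar_bar := G.bar_bar
  bar_ne := G.bar_ne
  lab := fun x => if x = e then n else G.lab x

/-- `Trav G A v n w m`: an edge end at `v` with label `n` can travel along `A`
and ends at `w` with label `m`. -/
def Trav (G : LGraph V E) : List E → V → ℤ → V → ℤ → Prop
  | [], v, n, w, m => v = w ∧ n = m
  | a :: l, v, n, w, m => G.o a = v ∧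
      ∃ k, n = G.lab a * k ∧ Trav G l (G.t a) (G.lab (G.bar a) * k) w m

theorem upd_self (G : LGraph V E) (e : E) : G.upd e (G.o e) (G.lab e) = G := by
  obtain ⟨o, bar, h1, h2, lab⟩ := G
  simp only [upd, LGraph.mk.injEq, true_and]
  refine ⟨?_, ?_⟩ <;> funext x <;> by_cases h : x = e <;> simp [h]

theorem upd_upd (G : LGraph V E) (e : E) (v w : V) (n m : ℤ) :
    (G.upd e v n).upd e w m = G.upd e w m := by
  simp only [upd, LGraph.mk.injEq, true_and]
  refine ⟨?_, ?_⟩ <;> funext x <;> by_cases h : x = e <;> simp [h]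

theorem upd_comm (G : LGraph V E) {e f : E} (hef : f ≠ e) (v w : V) (n m : ℤ) :
    (G.upd e v n).upd f w m = (G.upd f w m).upd e v n := by
  simp only [upd, LGraph.mk.injEq, true_and]
  refine ⟨?_, ?_⟩ <;> funext x <;> by_cases h : x = e <;> by_cases h' : x = f <;> grind

theorem slide_eq_upd (G : LGraph V E) (e f : E) :
    G.slide e f = G.upd e (G.t f) (G.lab e * G.lab (G.bar f) / G.lab f) := rfl

@[simp] theorem upd_bar (G : LGraph V E) (e : E) (v : V) (n : ℤ) :
    (G.upd e v n).bar = G.bar := rfl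

theorem upd_o_self (G : LGraph V E) (e : E) (v : V) (n : ℤ) : (G.upd e v n).o e = v := by
  simp [upd]

theorem upd_lab_self (G : LGraph V E) (e : E) (v : V) (n : ℤ) : (G.upd e v n).lab e = n := by
  simp [upd]

theorem upd_o_ne (G : LGraph V E) {e x : E} (h : x ≠ e) (v : V) (n : ℤ) :
    (G.upd e v n).o x = G.o x := by
  simp [upd, h]

theorem upd_lab_ne (G : LGraph V E) {e x : E} (h : x ≠ e) (v : V) (n : ℤ) :
    (G.upd e v n).lab x = G.lab x := by
  simp [upd, h]

theorem bar_ne_of (G : LGraph V E) {e x : E} (h : x ≠ G.bar e) : G.bar x ≠ e := by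
  rintro rfl
  exact h (G.bar_bar x).symm

theorem upd_t_ne (G : LGraph V E) {e x : E} (h : x ≠ G.bar e) (v : V) (n : ℤ) :
    (G.upd e v n).t x = G.t x :=
  G.upd_o_ne (G.bar_ne_of h) v n

theorem trav_append (G : LGraph V E) (A B : List E) (v w u : V) (n m p : ℤ)
    (h1 : G.Trav A v n w m) (h2 : G.Trav B w m u p) : G.Trav (A ++ B) v n u p := by
  induction A generalizing v n with
  | nil => obtain ⟨rfl, rfl⟩ := h1; exact h2
  | cons a l ih =>
    obtain ⟨ho, k, hk, h⟩ := h1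
    exact ⟨ho, k, hk, ih _ _ h⟩

theorem trav_reverse (G : LGraph V E) (A : List E) (v w : V) (n m c : ℤ)
    (h : G.Trav A v n w m) : G.Trav (A.reverse.map G.bar) w (c * m) v (c * n) := by
  induction A generalizing v n with
  | nil => obtain ⟨rfl, rfl⟩ := h; exact ⟨rfl, rfl⟩
  | cons a l ih =>
    obtain ⟨ho, k, hk, h⟩ := h
    rw [List.reverse_cons, List.map_append]
    refine G.trav_append _ _ _ _ _ _ _ _ (ih _ _ h) ⟨rfl, c * k, by ring, ?_⟩
    refine ⟨?_, ?_⟩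
    · simp [t, G.bar_bar, ho]
    · rw [G.bar_bar, hk]; ring

theorem trav_upd (G : LGraph V E) (e : E) (v' : V) (n' : ℤ) (A : List E)
    (hA : ∀ x ∈ A, x ≠ e ∧ x ≠ G.bar e) (v w : V) (n m : ℤ)
    (h : G.Trav A v n w m) : (G.upd e v' n').Trav A v n w m := by
  induction A generalizing v n with
  | nil => exact h
  | cons a l ih =>
    obtain ⟨ho, k, hk, h⟩ := h
    obtain ⟨ha, ha'⟩ := hA a (by simp)
    refine ⟨by rw [G.upd_o_ne ha, ho], k, by rw [G.upd_lab_ne ha, hk], ?_⟩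
    rw [G.upd_t_ne ha', upd_bar, G.upd_lab_ne (G.bar_ne_of ha')]
    exact ih (fun x hx => hA x (by simp [hx])) _ _ h

theorem slide_upd (G : LGraph V E) (hpos : G.Positive) {e a : E} (ha : a ≠ e)
    (ha' : a ≠ G.bar e) (v : V) (k : ℤ) :
    (G.upd e v (G.lab a * k)).slide e a = G.upd e (G.t a) (G.lab (G.bar a) * k) := by
  rw [slide_eq_upd, upd_upd, G.upd_t_ne ha', upd_lab_self, upd_bar, G.upd_lab_ne ha,
    G.upd_lab_ne (G.bar_ne_of ha'), mul_assoc, Int.mul_ediv_cancel_left _ (hpos a).ne', mul_comm k]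

theorem trav_pos (G : LGraph V E) (hpos : G.Positive) (A : List E) (v w : V) (n m : ℤ)
    (hn : 0 < n) (h : G.Trav A v n w m) : 0 < m := by
  induction A generalizing v n with
  | nil => exact h.2 ▸ hn
  | cons a l ih =>
    obtain ⟨_, k, rfl, h⟩ := h
    exact ih _ _ (mul_pos (hpos _) (pos_of_mul_pos_right hn (hpos a).le)) h

theorem good_can (G : LGraph V E) (e : E) (A : List E) (h : G.GoodSlidePath e A) :
    G.CanSlidePath e A := by
  induction A generalizing G with
  | nil => trivial
  | cons a l ih => exact ⟨h.1, ih _ h.2.2⟩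

theorem trav_of_can (G : LGraph V E) (hpos : G.Positive) (e : E) (A : List E)
    (v : V) (n : ℤ) (h : (G.upd e v n).CanSlidePath e A) :
    ∃ w m, G.Trav A v n w m := by
  induction A generalizing v n with
  | nil => exact ⟨v, n, rfl, rfl⟩
  | cons a l ih =>
    obtain ⟨⟨ha, ha', ho, k, hk⟩, h⟩ := h
    rw [upd_bar] at ha'
    rw [G.upd_o_ne ha, upd_o_self] at ho
    rw [upd_lab_self, G.upd_lab_ne ha] at hk
    subst hk
    rw [G.slide_upd hpos ha ha'] at h
    obtain ⟨w, m, h⟩ := ih _ _ h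
    exact ⟨w, m, ho, k, rfl, h⟩

theorem can_of_trav (G : LGraph V E) (hpos : G.Positive) (e : E) (A : List E)
    (hA : ∀ x ∈ A, x ≠ e ∧ x ≠ G.bar e) (v w : V) (n m : ℤ) (h : G.Trav A v n w m) :
    (G.upd e v n).CanSlidePath e A ∧ (G.upd e v n).slidePath e A = G.upd e w m := by
  induction A generalizing v n with
  | nil => obtain ⟨rfl, rfl⟩ := h; exact ⟨trivial, rfl⟩
  | cons a l ih =>
    obtain ⟨ho, k, rfl, h⟩ := h
    obtain ⟨ha, ha'⟩ := hA a (by simp)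
    obtain ⟨h1, h2⟩ := ih (fun x hx => hA x (by simp [hx])) _ _ h
    rw [← G.slide_upd hpos ha ha' v] at h1 h2
    refine ⟨⟨⟨ha, ha', ?_, ?_⟩, h1⟩, h2⟩
    · rw [G.upd_o_ne ha, upd_o_self, ho]
    · rw [G.upd_lab_ne ha, upd_lab_self]; exact dvd_mul_right _ _

theorem upd_positive (G : LGraph V E) (hpos : G.Positive) (e : E) (v : V) (n : ℤ) (hn : 0 < n) :
    (G.upd e v n).Positive := by
  intro x
  by_cases h : x = e
  · subst h; rwa [upd_lab_self]
  · rw [G.upd_lab_ne h]; exact hpos x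

end LGraph

/-- (Lemma 4.3(d)) In a reduced non-ascending positively-labeled graph,
for mobile edges `e, f` with `f ∉ {e, ē}` and a path `A` avoiding `{e, ē, f, f̄}`:
if `e` can slide over `A` and afterwards `f` over `e` (all slides valid, all intermediate
graphs reduced), then `f` can slide over `Ā·e` and afterwards `e` over `A`, with the
same resulting labeled graph. -/
theorem stmt15 {V E : Type} [Finite V] [Finite E] (G : LGraph V E)
    (hpos : G.Positive) (hred : G.Reduced) (hna : G.NonAscending)
    (e f : E) (hme : G.Mobile e) (hmf : G.Mobile f)
    (hfe : f ≠ e) (hfebar : f ≠ G.bar e)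
    (A : List E)
    (hA : ∀ x ∈ A, x ≠ e ∧ x ≠ G.bar e ∧ x ≠ f ∧ x ≠ G.bar f)
    (h1 : G.GoodSlidePath e A)
    (h2 : (G.slidePath e A).CanSlide f e)
    (hred2 : ((G.slidePath e A).slide f e).Reduced) :
    G.CanSlidePath f (A.reverse.map G.bar ++ [e]) ∧
      (G.slidePath f (A.reverse.map G.bar ++ [e])).CanSlidePath e A ∧
      (G.slidePath e A).slide f e
        = (G.slidePath f (A.reverse.map G.bar ++ [e])).slidePath e A := by
  have hef' : e ≠ G.bar f := fun h => hfebar (by rw [h, G.bar_bar])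
  have hc := G.good_can e A h1
  rw [← G.upd_self e] at hc
  obtain ⟨w, m, htr⟩ := G.trav_of_can hpos e A _ _ hc
  have hm : 0 < m := G.trav_pos hpos A _ _ _ _ (hpos e) htr
  have hAe : ∀ x ∈ A, x ≠ e ∧ x ≠ G.bar e := fun x hx => ⟨(hA x hx).1, (hA x hx).2.1⟩
  have hAf : ∀ x ∈ A, x ≠ f ∧ x ≠ G.bar f := fun x hx => ⟨(hA x hx).2.2.1, (hA x hx).2.2.2⟩
  have hs := (G.can_of_trav hpos e A hAe _ _ _ _ htr).2
  rw [G.upd_self e] at hs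
  rw [hs] at h2 ⊢
  obtain ⟨-, -, ho, k, hk⟩ := h2
  rw [G.upd_o_self, G.upd_o_ne hfe] at ho
  rw [G.upd_lab_self, G.upd_lab_ne hfe] at hk
  have hkpos : 0 < k := pos_of_mul_pos_right (hk ▸ hpos f) hm.le
  -- the path traversed by `f`
  have htf : G.Trav (A.reverse.map G.bar ++ [e]) (G.o f) (G.lab f) (G.t e)
      (G.lab (G.bar e) * k) := by
    refine G.trav_append _ _ _ _ _ _ _ _ (G.trav_reverse A _ _ _ _ k htr |> fun h => ?_)
      (⟨rfl, k, mul_comm _ _, rfl, rfl⟩ : G.Trav [e] (G.o e) (k * G.lab e) _ _)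
    rw [hk, ← ho, mul_comm m k]
    exact h
  have hBf : ∀ x ∈ A.reverse.map G.bar ++ [e], x ≠ f ∧ x ≠ G.bar f := by
    intro x hx
    simp only [List.mem_append, List.mem_map, List.mem_reverse, List.mem_singleton] at hx
    rcases hx with ⟨y, hy, rfl⟩ | rfl
    · refine ⟨G.bar_ne_of (hAf y hy).2, fun h => (hAf y hy).1 ?_⟩
      rw [← G.bar_bar y, h, G.bar_bar]
    · exact ⟨hfe.symm, hef'⟩
  obtain ⟨hcf, hsf⟩ := G.can_of_trav hpos f _ hBf _ _ _ _ htf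
  rw [G.upd_self f] at hcf hsf
  rw [hsf]
  refine ⟨hcf, ?_⟩
  set H := G.upd f (G.t e) (G.lab (G.bar e) * k) with hH
  have hHpos : H.Positive := G.upd_positive hpos f _ _ (mul_pos (hpos _) hkpos)
  have htH : H.Trav A (G.o e) (G.lab e) w m := G.trav_upd f _ _ A hAf _ _ _ _ htr
  obtain ⟨hce, hse⟩ := H.can_of_trav hHpos e A hAe _ _ _ _ htH
  have hHe : H.upd e (G.o e) (G.lab e) = H := by
    rw [hH, ← G.upd_comm hfe, G.upd_self e]
  rw [hHe] at hce hse
  refine ⟨hce, ?_⟩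
  have hte : (G.upd e w m).t e = G.t e := G.upd_o_ne (G.bar_ne e) w m
  rw [hse, hH, ← G.upd_comm hfe, LGraph.slide_eq_upd, hte, G.upd_lab_ne hfe, LGraph.upd_bar,
    G.upd_lab_ne (G.bar_ne e), G.upd_lab_self, hk, mul_assoc,
    Int.mul_ediv_cancel_left _ hm.ne', mul_comm k]
end

section
/- Let Γ be a non-ascending n-rose labeled graph with all labels positive and n ≤ 3, and let e₁,…,e_k (one orientation of each mobile pair, 0 ≤ k ≤ n) be exactly the mobile edges of Γ up to orientation. Suppose Γ′ is obtained from Γ by a finite sequence of single slide moves, each sliding a mobile edge. Then Γ′ can also be obtained from Γ by a finite sequence of single slide moves of mobile edges that decomposes into k consecutive blocks, where for each j = 1,…,k the j-th block consists only of slides of the edges e_j and ē_j. -/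
namespace LGraph

variable {V E : Type}

/-- One label move: a label divisible by `λ(f)` is carried over `f`. -/
def Stp (G : LGraph V E) (S : E → Prop) (x y : ℤ) : Prop :=
  ∃ f, S f ∧ ∃ r : ℤ, x = r * G.lab f ∧ y = r * G.lab (G.bar f)

/-- Labels reachable by carrying over edges from `S`. -/
def Rch (G : LGraph V E) (S : E → Prop) : ℤ → ℤ → Prop := Relation.ReflTransGen (G.Stp S)

/-- The edges other than `e`, `ē`. -/
def Off (G : LGraph V E) (e : E) : E → Prop := fun x => x ≠ e ∧ x ≠ G.bar e

/-- The edges outside two given pairs. -/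
def Off2 (G : LGraph V E) (e f : E) : E → Prop := fun x => G.Off e x ∧ G.Off f x

theorem Rch.trans {G : LGraph V E} {S : E → Prop} {x y z : ℤ}
    (h : G.Rch S x y) (h' : G.Rch S y z) : G.Rch S x z := Relation.ReflTransGen.trans h h'

theorem Rch.map {G G' : LGraph V E} {S S' : E → Prop} (φ : ℤ → ℤ)
    (h : ∀ a b, G.Stp S a b → G'.Stp S' (φ a) (φ b)) {x y : ℤ}
    (hr : G.Rch S x y) : G'.Rch S' (φ x) (φ y) := by
  induction hr with
  | refl => exact Relation.ReflTransGen.refl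
  | tail _ hst ih => exact Relation.ReflTransGen.tail ih (h _ _ hst)

theorem Rch.mono {G : LGraph V E} {S S' : E → Prop} (h : ∀ x, S x → S' x) {x y : ℤ}
    (hr : G.Rch S x y) : G.Rch S' x y := by
  refine Rch.map id ?_ hr
  rintro a b ⟨f, hf, r, h1, h2⟩
  exact ⟨f, h f hf, r, h1, h2⟩

theorem Rch.scale {G : LGraph V E} {S : E → Prop} {x y : ℤ} (m : ℤ)
    (hr : G.Rch S x y) : G.Rch S (m * x) (m * y) := by
  refine Rch.map (fun z => m * z) ?_ hr
  rintro a b ⟨f, hf, r, rfl, rfl⟩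
  exact ⟨f, hf, m * r, by ring, by ring⟩

theorem Rch.symm {G : LGraph V E} {S : E → Prop} (hS : ∀ x, S x → S (G.bar x)) {x y : ℤ}
    (hr : G.Rch S x y) : G.Rch S y x := by
  induction hr with
  | refl => exact Relation.ReflTransGen.refl
  | tail _ hst ih =>
    obtain ⟨f, hf, r, h1, h2⟩ := hst
    refine Relation.ReflTransGen.head ?_ ih
    exact ⟨G.bar f, hS f hf, r, h2, by rw [G.bar_bar]; exact h1⟩

theorem Rch.pos {G : LGraph V E} (hp : G.Positive) {S : E → Prop} {x y : ℤ}
    (hr : G.Rch S x y) (hx : 0 < x) : 0 < y := by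
  induction hr with
  | refl => exact hx
  | tail _ h ih =>
    obtain ⟨f, -, r, rfl, rfl⟩ := h
    exact mul_pos (pos_of_mul_pos_left ih (hp f).le) (hp _)

theorem off_bar {G : LGraph V E} {e x : E} (h : G.Off e x) : G.Off e (G.bar x) := by
  refine ⟨fun h' => h.2 ?_, fun h' => h.1 ?_⟩
  · rw [← h', G.bar_bar]
  · rw [← G.bar_bar x, h', G.bar_bar]

theorem off_comm {G : LGraph V E} {e x : E} (h : G.Off e x) : G.Off x e := by
  refine ⟨fun h' => h.1 h'.symm, fun h' => h.2 ?_⟩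
  rw [h', G.bar_bar]

theorem off_of_bar {G : LGraph V E} {e x : E} (h : G.Off (G.bar e) x) : G.Off e x :=
  ⟨by have := h.2; rwa [G.bar_bar] at this, h.1⟩

theorem off_to_bar {G : LGraph V E} {e x : E} (h : G.Off e x) : G.Off (G.bar e) x :=
  ⟨h.2, by rw [G.bar_bar]; exact h.1⟩

theorem off2_bar {G : LGraph V E} {e f x : E} (h : G.Off2 e f x) : G.Off2 e f (G.bar x) :=
  ⟨off_bar h.1, off_bar h.2⟩

/-- From an edge path to reachability of labels. -/
theorem rch_of_path (G : LGraph V E) (hp : G.Positive) (S : E → Prop) (l : List E) (x : ℤ)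
    (hS : ∀ a ∈ l, S a)
    (h : ∀ i : Fin l.length, ∃ k : ℤ,
      (x : ℚ) * G.q (l.take i.1) = (k : ℚ) * (G.lab (l.get i) : ℚ)) :
    ∃ z : ℤ, (z : ℚ) = x * G.q l ∧ G.Rch S x z := by
  induction l generalizing x with
  | nil => exact ⟨x, by simp [q], Relation.ReflTransGen.refl⟩
  | cons f l ih =>
    obtain ⟨k, hk⟩ := h ⟨0, by simp⟩
    have hf : (G.lab f : ℚ) ≠ 0 := by exact_mod_cast (hp f).ne'
    simp [q] at hk
    have hx1 : ((k * G.lab (G.bar f) : ℤ) : ℚ) = x * G.qe f := by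
      push_cast
      rw [hk, qe]
      field_simp
    obtain ⟨z, hz, hr⟩ := ih (k * G.lab (G.bar f)) (fun a ha => hS a (by simp [ha])) (by
      intro i
      obtain ⟨j, hj⟩ := h i.succ
      refine ⟨j, ?_⟩
      rw [hx1]
      simp [q] at hj ⊢
      rw [← hj]
      ring)
    refine ⟨z, ?_, ?_⟩
    · rw [hz, hx1]
      simp [q]
      ring
    · refine Relation.ReflTransGen.head ⟨f, hS f (by simp), k, by exact_mod_cast hk, rfl⟩ hr

theorem reduced_of_sub [Subsingleton V] (G : LGraph V E) : G.Reduced :=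
  fun _ _ => Subsingleton.elim _ _

theorem nonAsc_slide [Subsingleton V] {G : LGraph V E} (h : G.NonAscending) {e f : E}
    (hc : G.CanSlide e f) : (G.slide e f).NonAscending := by
  intro Y hY
  refine h Y (Relation.ReflTransGen.head ?_ hY)
  exact ⟨Or.inl ⟨e, f, hc, isom_refl _⟩, reduced_of_sub _⟩

theorem pos_slide {G : LGraph V E} (h : G.Positive) {e f : E}
    (hc : G.CanSlide e f) : (G.slide e f).Positive := by
  intro x
  obtain ⟨-, -, -, r, hr⟩ := hc
  simp only [slide]
  split_ifs
  · have h1 := h e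
    rw [hr] at h1 ⊢
    have hr' : 0 < r := pos_of_mul_pos_right h1 (h f).le
    rw [mul_assoc, Int.mul_ediv_cancel_left _ (h f).ne']
    exact mul_pos hr' (h _)
  · exact h x

theorem slide_lab_self {G : LGraph V E} (h : G.Positive) {e f : E} {r : ℤ}
    (hr : G.lab e = r * G.lab f) : (G.slide e f).lab e = r * G.lab (G.bar f) := by
  simp only [slide, if_true]
  rw [hr, mul_right_comm, Int.mul_ediv_cancel _ (h f).ne']

theorem slide_lab_ne {G : LGraph V E} {e f x : E} (hx : x ≠ e) :
    (G.slide e f).lab x = G.lab x := by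
  simp [slide, hx]

/-- The inverse of the A-move on a rose. -/
noncomputable def unA (G : LGraph V E) (y : E) (m : ℤ) : LGraph (Option V) (E ⊕ Bool) where
  o := fun x => match x with
    | Sum.inl x => open Classical in if x = y ∨ x = G.bar y then none else some (G.o x)
    | Sum.inr true => none
    | Sum.inr false => some (G.o y)
  bar := fun x => match x with
    | Sum.inl x => Sum.inl (G.bar x)
    | Sum.inr b => Sum.inr (!b)
  bar_bar := by rintro (x | x) <;> simp [G.bar_bar]
  bar_ne := by rintro (x | x) <;> simp [G.bar_ne]
  lab := fun x => match x with
    | Sum.inl x => open Classical in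
      if x = y then 1 else if x = G.bar y then m else G.lab x
    | Sum.inr true => m
    | Sum.inr false => G.lab y

theorem noVirtAsc [Subsingleton V] {G : LGraph V E} (hp : G.Positive) (hna : G.NonAscending)
    {y : E} {m : ℤ} (h : G.lab (G.bar y) = m * G.lab y) : m = 1 := by
  by_contra hm
  have hyb : G.bar y ≠ y := G.bar_ne y
  by_cases h1 : G.lab y = 1
  · refine hna _ Relation.ReflTransGen.refl ⟨y, Subsingleton.elim _ _, h1, ?_⟩
    change G.lab (G.bar y) ≠ 1
    rw [h, h1]; simpa using hm
  · have hasc : (G.unA y m).HasStrictAscendingLoop := by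
      refine ⟨Sum.inl y, ?_, ?_, ?_⟩
      · simp [unA, t]
      · simp [unA]
      · simp [unA, hyb, hm]
    have hred : (G.unA y m).Reduced := by
      rintro (x | x) hx
      · simp only [t, unA]
        by_cases hxy : x = y
        · simp [hxy]
        · by_cases hxy2 : x = G.bar y
          · simp [hxy2, G.bar_bar]
          · have h3 : G.bar x ≠ y := fun h' => hxy2 (by rw [← h', G.bar_bar])
            have h4 : G.bar x ≠ G.bar y := fun h' => hxy (by rw [← G.bar_bar x, h', G.bar_bar])
            simp [hxy, hxy2, h3, h4]
            exact Subsingleton.elim _ _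
      · cases x
        · exact absurd hx h1
        · exact absurd hx hm
    refine hna ⟨_, _, G.unA y m⟩ (Relation.ReflTransGen.single ⟨?_, hred⟩) hasc
    refine Or.inr (Or.inr (Or.inr (Or.inr ?_)))
    refine ⟨Sum.inl y, Sum.inr true, y, fun _ => G.o y,
      fun x => match x with | Sum.inl x => x | Sum.inr _ => y, ?_, ?_, ?_, ?_, ?_, ?_, ?_, ?_,
      ?_, ?_, ?_, ?_, ?_, ?_, ?_, ?_, ?_, ?_⟩
    · simp [unA, t]
    · simp [unA]
    · simp [unA, hyb, hm]
    · simp [unA]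
    · simp [unA, t]
    · simpa [unA] using hm
    · simpa [unA] using h1
    · simp [unA, hyb]
    · rintro (x | x) hx
      · by_cases hxy : x = y
        · simp [hxy]
        · by_cases hxy2 : x = G.bar y
          · simp [hxy2, unA]
          · simp [unA, hxy, hxy2] at hx
      · cases x
        · simp [unA] at hx
        · simp
    · rfl
    · exact Subsingleton.elim _ _
    · simp [unA]
    · simp [unA, hyb, h, mul_comm]
    · rintro (_ | w₁) (_ | w₂) h1 h2 _
      · rfl
      · simp [unA] at h1
      · simp [unA] at h2
      · exact congrArg some (Subsingleton.elim _ _)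
    · intro v
      exact ⟨some v, by simp [unA], Subsingleton.elim _ _⟩
    · rintro (x | x) h1 h2 h3 h4
      · have hxy : x ≠ y := fun h => h1 (by rw [h])
        have hxy2 : x ≠ G.bar y := fun h => h2 (by rw [h]; rfl)
        refine ⟨hxy, hxy2, Subsingleton.elim _ _, rfl, ?_⟩
        simp [unA, hxy, hxy2]
      · cases x
        · exact absurd rfl h4
        · exact absurd rfl h3
    · rintro (x | x) (x' | x') h1 h2 h3 h4 h5 h6 h7 h8 hh
      · exact congrArg Sum.inl hh
      · cases x'
        · exact absurd rfl h8
        · exact absurd rfl h7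
      · cases x
        · exact absurd rfl h4
        · exact absurd rfl h3
      · cases x
        · exact absurd rfl h4
        · exact absurd rfl h3
    · intro x hx hx2
      refine ⟨Sum.inl x, ?_, ?_, by simp, ?_, rfl⟩
      · simpa using hx
      · simpa [unA] using hx2
      · simp [unA]

/-- Realise a reachable label by slides. -/
theorem realise [Subsingleton V] {G : LGraph V E} (hp : G.Positive) (hna : G.NonAscending)
    {y : E} {z : ℤ} (h : G.Rch (G.Off y) (G.lab y) z) :
    ∃ G' : LGraph V E, G'.Positive ∧ G'.NonAscending ∧ G'.bar = G.bar ∧ G'.lab y = z ∧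
      ∀ x, x ≠ y → G'.lab x = G.lab x := by
  induction h with
  | refl => exact ⟨G, hp, hna, rfl, rfl, fun _ _ => rfl⟩
  | tail _ hst ih =>
    obtain ⟨G', hp', hna', hb, hl, hr⟩ := ih
    obtain ⟨f, hf, r, h1, h2⟩ := hst
    have hbf : G.bar f ≠ y := (off_bar hf).1
    have hlf := hr f hf.1
    have hlbf := hr _ hbf
    have hc : G'.CanSlide y f :=
      ⟨hf.1, by rw [hb]; exact hf.2, Subsingleton.elim _ _, by
        rw [hlf, hl, h1]; exact Dvd.intro_left _ rfl⟩
    refine ⟨G'.slide y f, pos_slide hp' hc, nonAsc_slide hna' hc, hb, ?_, ?_⟩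
    · rw [slide_lab_self hp' (r := r) (by rw [hl, h1, hlf]), hb, hlbf, h2]
    · intro x hx
      rw [slide_lab_ne hx, hr x hx]

/-- No strict monotone cycles. -/
theorem noMono [Subsingleton V] {G : LGraph V E} (hp : G.Positive) (hna : G.NonAscending)
    {y : E} {m : ℤ} (h : G.Rch (G.Off y) (G.lab y) (m * G.lab (G.bar y))) : m = 1 := by
  obtain ⟨G', hp', hna', hb, hl, hr⟩ := realise hp hna h
  refine noVirtAsc hp' hna' (y := G.bar y) (m := m) ?_
  rw [hb, G.bar_bar, hl, hr _ (G.bar_ne y)]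

/-- Numerical mobility. -/
def Mob (G : LGraph V E) (e : E) : Prop :=
  ∃ k : ℤ, k ≠ 1 ∧ G.Rch (G.Off e) (G.lab e) (k * G.lab e)

theorem mono_false [Subsingleton V] {G : LGraph V E} (hp : G.Positive) (hna : G.NonAscending)
    {e : E} {l : List E} (h : G.IsStrictMonotoneCycle l e) : False := by
  obtain ⟨⟨⟨-, h1, -, h2⟩, -, k, hk⟩, hne⟩ := h
  obtain ⟨z, hz, hr⟩ := G.rch_of_path hp (G.Off (G.bar e)) l _ h1 h2
  have he : (G.lab e : ℚ) ≠ 0 := by exact_mod_cast (hp e).ne'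
  have hzk : z = k * G.lab e := by
    have h3 : G.q (l ++ [e]) = G.q l * ((G.lab (G.bar e) : ℚ) / G.lab e) := by simp [q, qe]
    have h4 : (z : ℚ) = k * G.lab e := by
      rw [hz, ← hk, h3]
      field_simp
    exact_mod_cast h4
  rw [hzk] at hr
  have := noMono hp hna (y := G.bar e) (m := k) (by rw [G.bar_bar]; exact hr)
  apply hne
  rw [hk, this]; simp

theorem mob_of_cycle {G : LGraph V E} (hp : G.Positive)
    {e : E} {l : List E} (h : G.IsStrictIntegerCycle e l) : G.Mob e := by
  obtain ⟨⟨-, h1, -, h2⟩, -, -, ⟨k, hk⟩, hne⟩ := h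
  obtain ⟨z, hz, hr⟩ := G.rch_of_path hp (G.Off e) l _ h1 h2
  refine ⟨k, ?_, ?_⟩
  · rintro rfl
    exact hne (by rw [hk]; simp)
  · have : z = k * G.lab e := by
      rw [hk] at hz
      rw [mul_comm]
      exact_mod_cast hz
    rwa [this] at hr

theorem mob_of_mobile [Subsingleton V] {G : LGraph V E} (hp : G.Positive) (hna : G.NonAscending)
    {e : E} (h : G.Mobile e) : G.Mob e ∨ G.Mob (G.bar e) := by
  rcases h with ⟨l, h | h⟩ | ⟨l, h | h⟩
  · exact (mono_false hp hna h).elim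
  · exact (mono_false hp hna h).elim
  · exact Or.inl (mob_of_cycle hp h)
  · exact Or.inr (mob_of_cycle hp h)

theorem rat_root {ρ : ℚ} {n : ℕ} {m : ℤ} (hn : n ≠ 0) (h : ρ ^ n = m) : ∃ j : ℤ, ρ = j := by
  have h1 : IsIntegral ℤ (ρ ^ n) := by rw [h]; exact isIntegral_algebraMap (R := ℤ) (x := m)
  have h2 : IsIntegral ℤ ρ := IsIntegral.of_pow (Nat.pos_of_ne_zero hn) h1
  obtain ⟨j, hj⟩ := IsIntegrallyClosed.isIntegral_iff.1 h2
  exact ⟨j, by rw [← hj]; simp⟩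

theorem qe_int [Subsingleton V] {G : LGraph V E} (hp : G.Positive) (hna : G.NonAscending)
    {g : E} {j : ℤ} (h : G.qe g = j) : G.qe g = 1 := by
  have hg : (G.lab g : ℚ) ≠ 0 := by exact_mod_cast (hp g).ne'
  have h2 : G.lab (G.bar g) = j * G.lab g := by
    rw [qe, div_eq_iff hg] at h
    exact_mod_cast h
  rw [h, noVirtAsc hp hna h2]; simp

theorem qe_bar {G : LGraph V E} (g : E) : G.qe (G.bar g) = (G.qe g)⁻¹ := by
  rw [qe, qe, G.bar_bar, inv_div]

theorem qe_zpow [Subsingleton V] {G : LGraph V E} (hp : G.Positive) (hna : G.NonAscending)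
    {g : E} {c : ℤ} {m : ℤ} (h : (G.qe g) ^ c = m) : m = 1 := by
  have key : ∀ (g' : E) (n : ℕ), (G.qe g') ^ n = m → m = 1 := by
    intro g' n hn
    by_cases h0 : n = 0
    · rw [h0, pow_zero] at hn
      exact_mod_cast hn.symm
    · obtain ⟨j, hj⟩ := rat_root h0 hn
      rw [qe_int hp hna hj, one_pow] at hn
      exact_mod_cast hn.symm
  obtain ⟨n, rfl | rfl⟩ := c.eq_nat_or_neg
  · exact key g n (by simpa using h)
  · exact key (G.bar g) n (by rw [qe_bar]; simpa using h)

/-- At most one further pair outside two pairs. -/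
theorem third [Finite E] {G : LGraph V E} (hE : Nat.card E ≤ 6) {e f g x : E}
    (hef : G.Off e f) (hg : G.Off2 e f g) (hx : G.Off2 e f x) : x = g ∨ x = G.bar g := by
  classical
  by_contra hcon
  push Not at hcon
  have := Fintype.ofFinite E
  have hb : ∀ a b : E, G.bar a = G.bar b ↔ a = b := fun a b =>
    ⟨fun h => by rw [← G.bar_bar a, h, G.bar_bar], fun h => by rw [h]⟩
  have hnd : [e, G.bar e, f, G.bar f, g, G.bar g, x].Nodup := by
    have h1 := G.bar_ne e
    have h2 := G.bar_ne f
    have h3 := G.bar_ne g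
    have a1 := off_bar hef
    have a2 := off_bar hg.1
    have a3 := off_bar hg.2
    simp only [List.nodup_cons, List.mem_cons, List.not_mem_nil, or_false, not_or]
    simp only [Off, Off2] at *
    grind
  have h7 := hnd.length_le_card
  rw [Nat.card_eq_fintype_card] at hE
  simp at h7
  omega

/-- Carrying around over the third pair only never gives a proper multiple. -/
theorem T_mul [Subsingleton V] [Finite E] {G : LGraph V E} (hp : G.Positive)
    (hna : G.NonAscending) (hE : Nat.card E ≤ 6) {e f : E} (hef : G.Off e f)
    {x m : ℤ} (hx : 0 < x) (h : G.Rch (G.Off2 e f) x (m * x)) : m = 1 := by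
  have hx' : (x : ℚ) ≠ 0 := by exact_mod_cast hx.ne'
  by_cases hg : ∃ g, G.Off2 e f g
  · obtain ⟨g, hg⟩ := hg
    have hlab : ∀ y, (G.lab y : ℚ) ≠ 0 := fun y => by exact_mod_cast (hp y).ne'
    have hq : G.qe g ≠ 0 := div_ne_zero (hlab _) (hlab _)
    have key : ∀ z, G.Rch (G.Off2 e f) x z → ∃ c : ℤ, (z : ℚ) = x * (G.qe g) ^ c := by
      intro z hz
      induction hz with
      | refl => exact ⟨0, by simp⟩
      | tail _ hst ih =>
        obtain ⟨c, hc⟩ := ih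
        obtain ⟨w, hw, r, rfl, rfl⟩ := hst
        have hstep : ((r * G.lab (G.bar w) : ℤ) : ℚ) = ((r * G.lab w : ℤ) : ℚ) * G.qe w := by
          have := hlab w
          push_cast
          rw [qe]
          field_simp
        rcases third hE hef hg hw with rfl | rfl
        · refine ⟨c + 1, ?_⟩
          rw [hstep, hc, zpow_add_one₀ hq]; ring
        · refine ⟨c - 1, ?_⟩
          rw [hstep, hc, zpow_sub_one₀ hq, qe_bar]; ring
    obtain ⟨c, hc⟩ := key _ h
    refine qe_zpow hp hna (g := g) (c := c) (m := m) ?_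
    push_cast at hc
    rw [mul_comm] at hc
    exact (mul_left_cancel₀ hx' hc).symm
  · push Not at hg
    have key : ∀ z, G.Rch (G.Off2 e f) x z → z = x := by
      intro z hz
      induction hz with
      | refl => rfl
      | tail _ hst ih =>
        obtain ⟨w, hw, -⟩ := hst
        exact absurd hw (hg w)
    have := key _ h
    have h2 : m * x = 1 * x := by rw [this, one_mul]
    exact mul_right_cancel₀ hx.ne' h2

theorem off_cases {G : LGraph V E} {e f w : E} (hw : G.Off e w) :
    G.Off2 e f w ∨ w = f ∨ w = G.bar f := by
  by_cases h1 : w = f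
  · exact Or.inr (Or.inl h1)
  · by_cases h2 : w = G.bar f
    · exact Or.inr (Or.inr h2)
    · exact Or.inl ⟨hw, h1, h2⟩

/-- Core: a mobile end is never equivalent, over the third pair, to an end of another pair. -/
theorem core [Subsingleton V] [Finite E] {G : LGraph V E} (hp : G.Positive)
    (hna : G.NonAscending) (hE : Nat.card E ≤ 6) {e f : E} (hef : G.Off e f)
    (he : G.Mob e) (hT : G.Rch (G.Off2 e f) (G.lab e) (G.lab f)) : False := by
  obtain ⟨k, hk, hr⟩ := he
  have hT' := hT.symm (fun x hx => off2_bar hx)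
  have hf1 : ∀ {t : ℤ}, G.Rch (G.Off2 e f) (G.lab f) (t * G.lab (G.bar f)) → t = 1 :=
    fun h => noMono hp hna (h.mono fun x hx => hx.2)
  have hf2 : ∀ {t : ℤ}, G.Rch (G.Off2 e f) (G.lab (G.bar f)) (t * G.lab f) → t = 1 := by
    intro t h
    refine noMono hp hna (y := G.bar f) (m := t) ?_
    rw [G.bar_bar]
    exact h.mono fun x hx => off_to_bar hx.2
  have key : ∀ z, G.Rch (G.Off e) (G.lab e) z →
      G.Rch (G.Off2 e f) (G.lab e) z ∨ G.Rch (G.Off2 e f) (G.lab (G.bar f)) z := by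
    intro z hz
    induction hz with
    | refl => exact Or.inl Relation.ReflTransGen.refl
    | tail _ hst ih =>
      obtain ⟨w, hw, r, rfl, rfl⟩ := hst
      rcases off_cases (f := f) hw with hw2 | rfl | rfl
      · rcases ih with ih | ih
        · exact Or.inl (ih.tail ⟨w, hw2, r, rfl, rfl⟩)
        · exact Or.inr (ih.tail ⟨w, hw2, r, rfl, rfl⟩)
      · have hr1 : r = 1 := by
          rcases ih with ih | ih
          · exact T_mul hp hna hE hef (hp _) (hT'.trans ih)
          · exact hf2 ih
        subst hr1
        rw [one_mul]
        exact Or.inr Relation.ReflTransGen.refl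
      · have hr1 : r = 1 := by
          rcases ih with ih | ih
          · exact hf1 (hT'.trans ih)
          · exact T_mul hp hna hE hef (hp _) ih
        subst hr1
        rw [one_mul, G.bar_bar]
        exact Or.inl hT
  rcases key _ hr with h | h
  · exact hk (T_mul hp hna hE hef (hp _) h)
  · exact hk (hf2 (h.trans (hT.scale k)))

/-- The first passage of a mobile end over another pair. -/
theorem first [Subsingleton V] [Finite E] {G : LGraph V E} (hp : G.Positive)
    (hna : G.NonAscending) (hE : Nat.card E ≤ 6) {e f : E} (hef : G.Off e f)
    (he : G.Mob e) : ∃ r : ℤ, 0 < r ∧ (G.Rch (G.Off2 e f) (G.lab e) (r * G.lab f) ∨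
      G.Rch (G.Off2 e f) (G.lab e) (r * G.lab (G.bar f))) := by
  obtain ⟨k, hk, hr⟩ := he
  by_contra hcon
  push Not at hcon
  have key : ∀ z, G.Rch (G.Off e) (G.lab e) z → G.Rch (G.Off2 e f) (G.lab e) z := by
    intro z hz
    induction hz with
    | refl => exact Relation.ReflTransGen.refl
    | tail _ hst ih =>
      obtain ⟨w, hw, r, rfl, rfl⟩ := hst
      have hrp : 0 < r := pos_of_mul_pos_left (ih.pos hp (hp _)) (hp w).le
      rcases off_cases (f := f) hw with hw2 | rfl | rfl
      · exact ih.tail ⟨w, hw2, r, rfl, rfl⟩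
      · exact absurd ih (hcon r hrp).1
      · exact absurd ih (hcon r hrp).2
  exact hk (T_mul hp hna hE hef (hp _) (key _ hr))

theorem two_mob [Subsingleton V] [Finite E] {G : LGraph V E} (hp : G.Positive)
    (hna : G.NonAscending) (hE : Nat.card E ≤ 6) {e f : E} (hef : G.Off e f)
    (he : G.Mob e) (hf : G.Mob f) : False := by
  have hswap : ∀ x, G.Off2 f e x → G.Off2 e f x := fun x h => ⟨h.2, h.1⟩
  have hbarT : ∀ x, G.Off2 e f x → G.Off2 e (G.bar f) x := fun x h => ⟨h.1, off_to_bar h.2⟩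
  obtain ⟨r, hr0, hr⟩ := first hp hna hE hef he
  obtain ⟨s, hs0, hs⟩ := first hp hna hE (off_comm hef) hf
  have one : ∀ {a b : ℤ}, 0 < a → 0 < b → a * b = 1 → a = 1 := by
    intro a b ha hb h
    nlinarith
  rcases hs with hs | hs
  · replace hs := hs.mono hswap
    have hs1 : s = 1 := by
      rcases hr with hr | hr
      · refine one hs0 hr0 (T_mul hp hna hE hef (hp f) ?_)
        rw [mul_assoc]
        exact hs.trans (hr.scale s)
      · refine one hs0 hr0 (noMono hp hna (y := f) ?_)
        rw [mul_assoc]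
        exact (hs.trans (hr.scale s)).mono fun x h => h.2
    rw [hs1, one_mul] at hs
    exact core hp hna hE hef he (hs.symm fun x hx => off2_bar hx)
  · replace hs := hs.mono hswap
    rcases hr with hr | hr
    · have hr1 : r = 1 := by
        refine one hr0 hs0 (noMono hp hna (y := e) ?_)
        rw [mul_assoc]
        exact (hr.trans (hs.scale r)).mono fun x h => h.1
      rw [hr1, one_mul] at hr
      exact core hp hna hE hef he hr
    · have hr1 : r = 1 := by
        refine one hr0 hs0 (noMono hp hna (y := e) ?_)
        rw [mul_assoc]
        refine Relation.ReflTransGen.trans (Relation.ReflTransGen.tail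
          (hr.mono fun x h => h.1) ⟨G.bar f, off_bar hef, r, rfl, rfl⟩) ?_
        rw [G.bar_bar]
        exact (hs.scale r).mono fun x h => h.1
      rw [hr1, one_mul] at hr
      exact core hp hna hE (off_bar hef) he (hr.mono hbarT)

/-- Two mobile edges form the same pair. -/
theorem unique_mob [Subsingleton V] [Finite E] {G : LGraph V E} (hp : G.Positive)
    (hna : G.NonAscending) (hE : Nat.card E ≤ 6) {e f : E}
    (he : G.Mob e ∨ G.Mob (G.bar e)) (hf : G.Mob f ∨ G.Mob (G.bar f)) :
    f = e ∨ f = G.bar e := by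
  by_contra hcon
  push Not at hcon
  have hef : G.Off e f := hcon
  rcases he with he | he <;> rcases hf with hf | hf
  · exact two_mob hp hna hE hef he hf
  · exact two_mob hp hna hE (off_bar hef) he hf
  · exact two_mob hp hna hE (off_to_bar hef) he hf
  · exact two_mob hp hna hE (off_to_bar (off_bar hef)) he hf

theorem rch_slide {G : LGraph V E} {y f e : E} (hy : y = e ∨ y = G.bar e) {a b : ℤ}
    (h : G.Rch (G.Off e) a b) : (G.slide y f).Rch ((G.slide y f).Off e) a b := by
  refine Rch.map id ?_ h
  rintro a b ⟨w, hw, r, h1, h2⟩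
  have key : ∀ v, G.Off e v → (G.slide y f).lab v = G.lab v := by
    intro v hv
    refine slide_lab_ne ?_
    rcases hy with rfl | rfl
    · exact hv.1
    · exact hv.2
  refine ⟨w, hw, r, ?_, ?_⟩
  · rw [key w hw]; exact h1
  · have : (G.slide y f).bar = G.bar := rfl
    rw [this, key _ (off_bar hw)]; exact h2

/-- Mobility of `e` survives slides of `e` or its reverse. -/
theorem mob_slide {G : LGraph V E} (hp : G.Positive) {y f e : E} (hy : y = e ∨ y = G.bar e)
    (hc : G.CanSlide y f) (he : G.Mob e) : (G.slide y f).Mob e := by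
  obtain ⟨k, hk, hr⟩ := he
  refine ⟨k, hk, rch_slide hy ?_⟩
  rcases hy with rfl | rfl
  · obtain ⟨h1, h2, -, r, hr'⟩ := hc
    rw [mul_comm] at hr'
    rw [slide_lab_self hp hr']
    have hst : G.Rch (G.Off y) (G.lab y) (r * G.lab (G.bar f)) :=
      Relation.ReflTransGen.single ⟨f, ⟨h1, h2⟩, r, hr', rfl⟩
    exact ((hst.symm fun x hx => off_bar hx).trans hr).trans (hst.scale k)
  · rw [slide_lab_ne (G.bar_ne e).symm]
    exact hr

theorem all_same [Subsingleton V] [Finite E] (hE : Nat.card E ≤ 6) (e : E)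
    (s : List (E × E)) : ∀ (G : LGraph V E), G.Positive → G.NonAscending →
    (G.Mob e ∨ G.Mob (G.bar e)) → G.MobileSlideSeq s →
    ∀ p ∈ s, p.1 = e ∨ p.1 = G.bar e := by
  induction s with
  | nil => intro G _ _ _ _ p hpm; simp at hpm
  | cons p s ih =>
    intro G hp hna he hs
    obtain ⟨h1, h2, h3⟩ := hs
    have hpe := unique_mob hp hna hE he (mob_of_mobile hp hna h1)
    have hpe' : p.1 = G.bar e ∨ p.1 = G.bar (G.bar e) := by
      rw [G.bar_bar]; exact hpe.symm
    have := ih (G.slide p.1 p.2) (pos_slide hp h2) (nonAsc_slide hna h2)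
      (he.imp (mob_slide hp hpe h2) (mob_slide hp hpe' h2)) h3
    intro p' hp'
    rcases List.mem_cons.1 hp' with rfl | hp'
    · exact hpe
    · exact this p' hp'

end LGraph

/-- (Proposition 4.6) Let `Γ` be a non-ascending `n`-rose (`n ≤ 3`) with
positive labels whose mobile edges, up to orientation, are exactly `es 0, …, es (k-1)`.
If `Γ'` is obtained from `Γ` by a finite sequence of single slides of mobile edges, then
`Γ'` is also obtained by such a sequence decomposing into `k` consecutive blocks, the `j`-th
block sliding only the edges `es j` and its reverse. -/
theorem stmt17 {V E : Type} [Finite V] [Finite E] (G : LGraph V E) (n : ℕ)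
    (hn : n ≤ 3) (hrose : G.IsRose n) (hpos : G.Positive) (hna : G.NonAscending)
    (k : ℕ) (es : Fin k → E)
    (hmob : ∀ i, G.Mobile (es i))
    (hinj : Function.Injective es)
    (hbar : ∀ i j, es i ≠ G.bar (es j))
    (hall : ∀ x : E, G.Mobile x → ∃ i, x = es i ∨ x = G.bar (es i))
    (s : List (E × E)) (hs : G.MobileSlideSeq s) :
    ∃ blocks : Fin k → List (E × E),
      G.MobileSlideSeq (List.ofFn blocks).flatten ∧
      G.slideSeq (List.ofFn blocks).flatten = G.slideSeq s ∧
      ∀ j : Fin k, ∀ p ∈ blocks j, p.1 = es j ∨ p.1 = G.bar (es j) := by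
  obtain ⟨hV, hcE⟩ := hrose
  have hsub : Subsingleton V := (Nat.card_eq_one_iff_unique.1 hV).1
  have hE : Nat.card E ≤ 6 := by omega
  match k, es, hmob, hinj, hbar, hall with
  | 0, es, hmob, hinj, hbar, hall =>
    cases s with
    | nil => exact ⟨fun _ => [], by simpa using hs, by simp, fun j => j.elim0⟩
    | cons p s => exact (hall _ hs.1).choose.elim0
  | 1, es, hmob, hinj, hbar, hall =>
    refine ⟨fun _ => s, by simpa using hs, by simp, fun j p hpm => ?_⟩
    exact LGraph.all_same hE (es j) s G hpos hna
      (LGraph.mob_of_mobile hpos hna (hmob j)) hs p hpm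
  | k + 2, es, hmob, hinj, hbar, hall =>
    exfalso
    rcases LGraph.unique_mob hpos hna hE (LGraph.mob_of_mobile hpos hna (hmob 0))
      (LGraph.mob_of_mobile hpos hna (hmob 1)) with h | h
    · have := hinj h
      simp at this
    · exact hbar _ _ h
end
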